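/- arXiv:2201.06380 — 3 statements merged into one kernel-verified Lean document; each statement's English description precedes it below -/
import Mathlib

section
/- Let B be an m×n matrix over F₂ and let k be the maximum, taken over all rows and all columns of B, of the number of nonzero entries in that row or column. Then B can be written as a sum B = P₁ + ⋯ + P_k of exactly k partial permutation matrices whose supports are pairwise disjoint; moreover, B cannot be written as a sum of fewer than k partial permutation matrices with pairwise disjoint supports. -/
/-- A partial permutation matrix over `F₂`: at most one nonzero entry in each
row and in each column. -/
def IsPartialPermMatrix {m n : ℕ} (P : Matrix (Fin m) (Fin n) (ZMod 2)) : Prop :=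
  (∀ i, (Finset.univ.filter fun j => P i j ≠ 0).card ≤ 1) ∧
  (∀ j, (Finset.univ.filter fun i => P i j ≠ 0).card ≤ 1)

/-- Two matrices have disjoint supports if they are never both nonzero at the
same entry. -/
def DisjointSupports {m n : ℕ} (P Q : Matrix (Fin m) (Fin n) (ZMod 2)) : Prop :=
  ∀ i j, P i j = 0 ∨ Q i j = 0

/-!
König's edge-colouring argument. Completing a natural-number matrix `N` with line sums at most `k`
to the symmetric square matrix `[D, N; Nᵀ, D']`, with `D` and `D'` diagonal, makes all line sums
equal to `k`. Hall's theorem then peels off permutation matrices one at a time, and the upper right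
corners of these are partial permutation matrices summing to `N`. Applied to the 0-1 indicator of
the support of `B`, this splits the support into `k` partial matchings. Conversely, the number of
nonzero entries on a line is subadditive.
-/

open Finset Matrix

section LineWeight

theorem hammingNorm_add_le {ι : Type*} {R : ι → Type*} [Fintype ι] [∀ i, AddZeroClass (R i)]
    [∀ i, DecidableEq (R i)] (v w : ∀ i, R i) :
    hammingNorm (v + w) ≤ hammingNorm v + hammingNorm w := by
  classical
  refine (card_le_card fun i hi => ?_).trans (card_union_le _ _)
  simp only [mem_union, mem_filter_univ] at hi ⊢
  by_contra! h
  exact hi (by simp [h])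

theorem hammingNorm_le_one_iff {ι : Type*} {R : ι → Type*} [Fintype ι] [∀ i, Zero (R i)]
    [∀ i, DecidableEq (R i)] {v : ∀ i, R i} :
    hammingNorm v ≤ 1 ↔ ∀ i j, v i ≠ 0 → v j ≠ 0 → i = j := by
  simp only [hammingNorm, card_le_one, mem_filter_univ]
  exact ⟨fun h i j hi hj => h i hi j hj, fun h i hi j hj => h i j hi hj⟩

variable {α β R : Type*} [Fintype α] [Fintype β] [DecidableEq R]

/-- The largest number of nonzero entries on a line (a row or a column) of `B`. The bound
`maxLineWeight P ≤ 1` expresses over any `R` that `P` has the shape of a partial permutation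
matrix; over `F₂` it says that `P` is one. -/
def maxLineWeight [Zero R] (B : Matrix α β R) : ℕ :=
  max (univ.sup fun i => hammingNorm (B i)) (univ.sup fun j => hammingNorm (Bᵀ j))

theorem maxLineWeight_le_iff [Zero R] {B : Matrix α β R} {k : ℕ} :
    maxLineWeight B ≤ k ↔ (∀ i, hammingNorm (B i) ≤ k) ∧ ∀ j, hammingNorm (Bᵀ j) ≤ k := by
  simp [maxLineWeight]

theorem maxLineWeight_zero [Zero R] : maxLineWeight (0 : Matrix α β R) = 0 :=
  Nat.le_zero.1 <| maxLineWeight_le_iff.2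
    ⟨fun _ => hammingNorm_zero.le, fun _ => hammingNorm_zero.le⟩

theorem maxLineWeight_add_le [AddZeroClass R] (B C : Matrix α β R) :
    maxLineWeight (B + C) ≤ maxLineWeight B + maxLineWeight C := by
  obtain ⟨hBr, hBc⟩ := maxLineWeight_le_iff.1 (le_refl (maxLineWeight B))
  obtain ⟨hCr, hCc⟩ := maxLineWeight_le_iff.1 (le_refl (maxLineWeight C))
  exact maxLineWeight_le_iff.2
    ⟨fun i => (hammingNorm_add_le (B i) (C i)).trans (add_le_add (hBr i) (hCr i)),
      fun j => (hammingNorm_add_le (Bᵀ j) (Cᵀ j)).trans (add_le_add (hBc j) (hCc j))⟩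

theorem maxLineWeight_sum_le {ι : Type*} [AddCommMonoid R] (s : Finset ι)
    (P : ι → Matrix α β R) : maxLineWeight (∑ t ∈ s, P t) ≤ ∑ t ∈ s, maxLineWeight (P t) :=
  le_sum_of_subadditive (M := Matrix α β R) maxLineWeight maxLineWeight_zero.le
    maxLineWeight_add_le s P

end LineWeight

section IntegralBirkhoff

theorem exists_injective_forall_ne_zero_of_sum_le {α β R : Type*} [Fintype α] [Fintype β]
    [AddCommMonoid R] [PartialOrder R] [IsOrderedCancelAddMonoid R] {M : Matrix α β R} {s : R}
    (hs : 0 < s) (hM : ∀ a b, 0 ≤ M a b) (hrow : ∀ a, s ≤ ∑ b, M a b)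
    (hcol : ∀ b, ∑ a, M a b ≤ s) :
    ∃ f : α → β, Function.Injective f ∧ ∀ a, M a (f a) ≠ 0 := by
  classical
  let support (a : α) : Finset β := {b | M a b ≠ 0}
  suffices hall : ∀ A : Finset α, #A ≤ #(A.biUnion support) by
    simpa [support] using (all_card_le_biUnion_card_iff_exists_injective support).1 hall
  intro A
  have sum_row_eq (a) (ha : a ∈ A) : ∑ b ∈ A.biUnion support, M a b = ∑ b, M a b :=
    sum_subset (subset_univ _) fun b _ hb => by
      by_contra h
      exact hb (mem_biUnion.2 ⟨a, ha, by simpa [support] using h⟩)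
  refine (nsmul_left_strictMono hs).le_iff_le.1 ?_
  calc #A • s ≤ ∑ a ∈ A, ∑ b ∈ A.biUnion support, M a b :=
        card_nsmul_le_sum _ _ _ fun a ha => (hrow a).trans_eq (sum_row_eq a ha).symm
    _ = ∑ b ∈ A.biUnion support, ∑ a ∈ A, M a b := sum_comm
    _ ≤ #(A.biUnion support) • s := sum_le_card_nsmul _ _ _ fun b _ =>
        (sum_le_univ_sum_of_nonneg fun a => hM a b).trans (hcol b)

variable {α : Type*} [Fintype α] [DecidableEq α]

theorem exists_perm_eq_permMatrix_add {k : ℕ} (hk : 0 < k) {M : Matrix α α ℕ}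
    (hrow : ∀ a, k ≤ ∑ b, M a b) (hcol : ∀ b, ∑ a, M a b ≤ k) :
    ∃ (σ : Equiv.Perm α) (N : Matrix α α ℕ), M = σ.permMatrix ℕ + N := by
  obtain ⟨g, hg, hgM⟩ := exists_injective_forall_ne_zero_of_sum_le hk
    (fun a b => (M a b).zero_le) hrow hcol
  let σ : Equiv.Perm α := Equiv.ofBijective g (Finite.injective_iff_bijective.1 hg)
  have permMatrix_le (a b) : σ.permMatrix ℕ a b ≤ M a b := by
    obtain rfl | hab := eq_or_ne (g a) b
    · simpa [σ] using Nat.one_le_iff_ne_zero.2 (hgM a)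
    · simp [σ, hab]
  refine ⟨σ, M - σ.permMatrix ℕ, ?_⟩
  ext a b
  exact (Nat.add_sub_of_le (permMatrix_le a b)).symm

theorem exists_eq_sum_permMatrix {k : ℕ} {M : Matrix α α ℕ} (hrow : ∀ a, ∑ b, M a b = k)
    (hcol : ∀ b, ∑ a, M a b = k) :
    ∃ σ : Fin k → Equiv.Perm α, M = ∑ t, (σ t).permMatrix ℕ := by
  induction k generalizing M with
  | zero =>
    refine ⟨Fin.elim0, ?_⟩
    ext a b
    simpa using sum_eq_zero_iff.1 (hrow a) b (mem_univ b)
  | succ k ih =>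
    obtain ⟨τ, N, rfl⟩ := exists_perm_eq_permMatrix_add k.succ_pos
      (fun a => (hrow a).ge) (fun b => (hcol b).le)
    have row_sum (a) : ∑ b, τ.permMatrix ℕ a b = 1 := by simp
    have col_sum (b) : ∑ a, τ.permMatrix ℕ a b = 1 := by simp [← Equiv.eq_symm_apply]
    simp only [Matrix.add_apply, sum_add_distrib, row_sum, col_sum, add_comm 1,
      Nat.add_right_cancel_iff] at hrow hcol
    obtain ⟨σ, rfl⟩ := ih hrow hcol
    exact ⟨Fin.cons τ σ, by simp only [Fin.sum_univ_succ, Fin.cons_zero, Fin.cons_succ]⟩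

end IntegralBirkhoff

section Konig

variable {α β : Type*}

/-- The partial matching between `α` and `β` consisting of the pairs with `σ (inl a) = inr b`. Its
matrix is the upper right block of the permutation matrix of `σ`. -/
def cornerPEquiv (σ : Equiv.Perm (α ⊕ β)) : α ≃. β where
  toFun a := (σ (.inl a)).getRight?
  invFun b := (σ.symm (.inr b)).getLeft?
  inv a b := by
    rw [Sum.getLeft?_eq_some_iff, Sum.getRight?_eq_some_iff, Equiv.symm_apply_eq, eq_comm]

theorem toMatrix_cornerPEquiv [DecidableEq α] [DecidableEq β] {R : Type*} [Zero R] [One R]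
    (σ : Equiv.Perm (α ⊕ β)) : (cornerPEquiv σ).toMatrix = (σ.permMatrix R).toBlocks₁₂ := by
  ext a b
  simp [toBlocks₁₂, cornerPEquiv]

variable [Fintype α] [Fintype β]

section Completion

variable [DecidableEq α] [DecidableEq β]

/-- The square matrix `[D, N; Nᵀ, D']` with `D` and `D'` diagonal, chosen so that every line sums
to `k`. The subtractions are truncated, so this is as intended only if the line sums of `N` are at
most `k`. -/
def lineSumCompletion (k : ℕ) (N : Matrix α β ℕ) : Matrix (α ⊕ β) (α ⊕ β) ℕ :=
  fromBlocks (diagonal fun i => k - ∑ j, N i j) N Nᵀ (diagonal fun j => k - ∑ i, N i j)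

theorem isSymm_lineSumCompletion (k : ℕ) (N : Matrix α β ℕ) : (lineSumCompletion k N).IsSymm :=
  IsSymm.fromBlocks (isSymm_diagonal _) rfl (isSymm_diagonal _)

theorem sum_lineSumCompletion_apply {k : ℕ} {N : Matrix α β ℕ} (hrow : ∀ i, ∑ j, N i j ≤ k)
    (hcol : ∀ j, ∑ i, N i j ≤ k) (a : α ⊕ β) : ∑ b, lineSumCompletion k N a b = k := by
  rcases a with i | j
  · simpa [lineSumCompletion, diagonal_apply] using Nat.sub_add_cancel (hrow i)
  · simpa [lineSumCompletion, diagonal_apply] using Nat.add_sub_of_le (hcol j)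

end Completion

theorem exists_eq_sum_toMatrix [DecidableEq β] {k : ℕ} {N : Matrix α β ℕ}
    (hrow : ∀ i, ∑ j, N i j ≤ k) (hcol : ∀ j, ∑ i, N i j ≤ k) :
    ∃ f : Fin k → α ≃. β, N = ∑ t, (f t).toMatrix := by
  classical
  have row_sum := sum_lineSumCompletion_apply hrow hcol
  obtain ⟨σ, hσ⟩ := exists_eq_sum_permMatrix row_sum fun b => by
    simpa only [(isSymm_lineSumCompletion k N).apply] using row_sum b
  refine ⟨fun t => cornerPEquiv (σ t), ?_⟩
  calc N = (lineSumCompletion k N).toBlocks₁₂ := (toBlocks_fromBlocks₁₂ ..).symm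
    _ = ∑ t, ((σ t).permMatrix ℕ).toBlocks₁₂ := by
      ext i j
      simp only [hσ, toBlocks₁₂, Matrix.sum_apply, of_apply]
    _ = ∑ t, (cornerPEquiv (σ t)).toMatrix := by simp only [toMatrix_cornerPEquiv]

theorem exists_pequiv_existsUnique_mem {R : Type*} [Zero R] [DecidableEq R] {B : Matrix α β R}
    {k : ℕ} (hB : maxLineWeight B ≤ k) :
    ∃ f : Fin k → α ≃. β, ∀ i j, B i j ≠ 0 → ∃! t, j ∈ f t i := by
  classical
  obtain ⟨hrow, hcol⟩ := maxLineWeight_le_iff.1 hB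
  obtain ⟨f, hf⟩ := exists_eq_sum_toMatrix (k := k) (N := of fun i j => if B i j ≠ 0 then 1 else 0)
    (fun i => (card_filter (B i · ≠ 0) univ).ge.trans (hrow i))
    (fun j => (card_filter (B · j ≠ 0) univ).ge.trans (hcol j))
  refine ⟨f, fun i j hij => ?_⟩
  have card_eq_one : #{t | j ∈ f t i} = 1 := by
    simpa [hij, Matrix.sum_apply] using (congr_fun₂ hf i j).symm
  simpa only [Fintype.existsUnique_iff_card_one] using card_eq_one

end Konig

section Decomposition

variable {α β R : Type*} [DecidableEq β]

/-- The matrix obtained from `B` by keeping the entries at the positions matched by `f` and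
replacing all others by zero. -/
def restrictTo [Zero R] (f : α ≃. β) (B : Matrix α β R) : Matrix α β R :=
  of fun i j => if j ∈ f i then B i j else 0

theorem mem_of_restrictTo_ne_zero [Zero R] {f : α ≃. β} {B : Matrix α β R} {i : α}
    {j : β} (h : restrictTo f B i j ≠ 0) : j ∈ f i := by
  by_contra hj
  exact h (if_neg hj)

theorem maxLineWeight_restrictTo_le_one [Fintype α] [Fintype β] [Zero R] [DecidableEq R]
    (f : α ≃. β) (B : Matrix α β R) : maxLineWeight (restrictTo f B) ≤ 1 := by
  refine maxLineWeight_le_iff.2 ⟨fun i => hammingNorm_le_one_iff.2 fun j j' hj hj' => ?_,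
    fun j => hammingNorm_le_one_iff.2 fun i i' hi hi' => ?_⟩
  · exact Option.mem_unique (mem_of_restrictTo_ne_zero hj) (mem_of_restrictTo_ne_zero hj')
  · exact f.inj (mem_of_restrictTo_ne_zero hi) (mem_of_restrictTo_ne_zero hi')

theorem eq_sum_restrictTo [AddCommMonoid R] {ι : Type*} [Fintype ι]
    {f : ι → α ≃. β} {B : Matrix α β R} (hf : ∀ i j, B i j ≠ 0 → ∃! t, j ∈ f t i) :
    B = ∑ t, restrictTo (f t) B := by
  ext i j
  rw [Matrix.sum_apply]
  by_cases hB : B i j = 0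
  · simp [restrictTo, hB]
  · obtain ⟨t, ht, ht_unique⟩ := hf i j hB
    have restrictTo_eq_zero (s) (hst : s ≠ t) : restrictTo (f s) B i j = 0 :=
      if_neg fun hs => hst (ht_unique s hs)
    rw [Fintype.sum_eq_single t restrictTo_eq_zero]
    exact (if_pos ht).symm

theorem restrictTo_eq_zero_or_eq_zero [Zero R] {ι : Type*} {f : ι → α ≃. β}
    {B : Matrix α β R} (hf : ∀ i j, B i j ≠ 0 → ∃! t, j ∈ f t i) {t s : ι} (hts : t ≠ s)
    (i : α) (j : β) : restrictTo (f t) B i j = 0 ∨ restrictTo (f s) B i j = 0 := by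
  by_contra! h
  have hB : B i j ≠ 0 := fun hB => h.1 (by simp [restrictTo, hB])
  exact hts ((hf i j hB).unique (mem_of_restrictTo_ne_zero h.1) (mem_of_restrictTo_ne_zero h.2))

end Decomposition

theorem stmt0_general {α β R : Type*} [Fintype α] [Fintype β] [AddCommMonoid R] [DecidableEq R]
    {B : Matrix α β R} {l : ℕ} :
    (∃ P : Fin l → Matrix α β R,
      (∀ t, maxLineWeight (P t) ≤ 1) ∧
      (∀ t s, t ≠ s → ∀ i j, P t i j = 0 ∨ P s i j = 0) ∧
      B = ∑ t, P t) ↔ maxLineWeight B ≤ l := by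
  constructor
  · rintro ⟨P, hP, -, rfl⟩
    calc maxLineWeight (∑ t, P t) ≤ ∑ t, maxLineWeight (P t) := maxLineWeight_sum_le _ _
      _ ≤ ∑ _ : Fin l, 1 := sum_le_sum fun t _ => hP t
      _ = l := by simp
  · intro hB
    obtain ⟨f, hf⟩ := exists_pequiv_existsUnique_mem hB
    classical
    exact ⟨fun t => restrictTo (f t) B, fun t => maxLineWeight_restrictTo_le_one (f t) B,
      fun _ _ hts => restrictTo_eq_zero_or_eq_zero hf hts, eq_sum_restrictTo hf⟩

theorem isPartialPermMatrix_iff_maxLineWeight_le_one {m n : ℕ}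
    {P : Matrix (Fin m) (Fin n) (ZMod 2)} : IsPartialPermMatrix P ↔ maxLineWeight P ≤ 1 :=
  maxLineWeight_le_iff.symm

theorem stmt0 {m n : ℕ} (B : Matrix (Fin m) (Fin n) (ZMod 2)) (k : ℕ)
    (hk : k =
      max
        (Finset.univ.sup fun i => (Finset.univ.filter fun j => B i j ≠ 0).card)
        (Finset.univ.sup fun j => (Finset.univ.filter fun i => B i j ≠ 0).card)) :
    (∃ P : Fin k → Matrix (Fin m) (Fin n) (ZMod 2),
      (∀ t, IsPartialPermMatrix (P t)) ∧
      (∀ t s, t ≠ s → DisjointSupports (P t) (P s)) ∧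
      B = ∑ t, P t) ∧
    (∀ l : ℕ,
      (∃ P : Fin l → Matrix (Fin m) (Fin n) (ZMod 2),
        (∀ t, IsPartialPermMatrix (P t)) ∧
        (∀ t s, t ≠ s → DisjointSupports (P t) (P s)) ∧
        B = ∑ t, P t) → k ≤ l) := by
  subst hk
  simp only [isPartialPermMatrix_iff_maxLineWeight_le_one]
  exact ⟨stmt0_general.2 le_rfl, fun _ => stmt0_general.1⟩
end

section
/- Let d : ℕ → ℕ satisfy d(1) = 0 and, for every n ≥ 2, d(n) ≤ d(⌈n/2⌉) + 2·⌈n/2⌉. Then for every n ≥ 1, d(n) ≤ 2n + 2·⌈log₂ n⌉. -/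
/-!
Rounding up gives `b * ⌈n/b⌉ - 1 ≤ (n - 1) + (b - 1)`. One step of the recurrence
`d n ≤ d ⌈n/b⌉ + c * ⌈n/b⌉` is therefore paid for by the decrease of the potential
`(n - 1) / (b - 1)`, up to a rounding loss of at most `1`; the number of rounding losses is the
depth `⌈log_b n⌉` of the recursion.
-/

section CeilDiv

variable {b n : ℕ}

lemma ceilDiv_pos_of_pos (hb : 0 < b) (hn : 0 < n) : 0 < n ⌈/⌉ b := by
  rw [← not_le, ceilDiv_le_iff_le_mul hb]
  lia

lemma mul_ceilDiv_lt_add (hb : 0 < b) : b * (n ⌈/⌉ b) < n + b := by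
  have h : b * (n ⌈/⌉ b) ≤ n + b - 1 := Nat.mul_div_le (n + b - 1) b
  lia

lemma ceilDiv_lt_self (hb : 1 < b) (hn : 1 < n) : n ⌈/⌉ b < n := by
  have h_round : b * (n ⌈/⌉ b) < n + b := mul_ceilDiv_lt_add (zero_lt_one.trans hb)
  have h_add_le_mul : n + b ≤ b * n := by rw [add_comm]; exact Nat.add_le_mul hb hn
  exact Nat.lt_of_mul_lt_mul_left (h_round.trans_le h_add_le_mul)

lemma clog_eq_clog_ceilDiv_add_one (hb : 1 < b) (hn : 1 < n) :
    Nat.clog b n = Nat.clog b (n ⌈/⌉ b) + 1 :=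
  Nat.clog_of_one_lt hb hn

end CeilDiv

theorem le_of_ceilDiv_recurrence {M : Type*} [Preorder M] [Add M] [AddRightMono M] {b : ℕ}
    (hb : 1 < b) {d u g : ℕ → M} (h_one : d 1 ≤ u 1)
    (hd : ∀ n, 1 < n → d n ≤ d (n ⌈/⌉ b) + g n)
    (hu : ∀ n, 1 < n → u (n ⌈/⌉ b) + g n ≤ u n) {n : ℕ} (hn : 0 < n) :
    d n ≤ u n := by
  induction n using Nat.strong_induction_on with
  | _ n ih =>
    obtain rfl | hn' : n = 1 ∨ 1 < n := by lia
    · exact h_one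
    · calc
        d n ≤ d (n ⌈/⌉ b) + g n := hd n hn'
        _ ≤ u (n ⌈/⌉ b) + g n := by
          gcongr
          exact ih _ (ceilDiv_lt_self hb hn') (ceilDiv_pos_of_pos (by lia) hn)
        _ ≤ u n := hu n hn'

section Field

variable {𝕜 : Type*} [Field 𝕜] [LinearOrder 𝕜] [IsStrictOrderedRing 𝕜] {b : ℕ}

lemma ceilDiv_sub_one_div_add_ceilDiv_le (hb : 1 < b) (n : ℕ) :
    ((n ⌈/⌉ b : ℕ) - 1 : 𝕜) / (b - 1) + (n ⌈/⌉ b : ℕ) ≤ (n - 1) / (b - 1) + 1 := by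
  have hb' : (0 : 𝕜) < b - 1 := sub_pos.2 (by exact_mod_cast hb)
  have h_round : (b * (n ⌈/⌉ b : ℕ) + 1 : 𝕜) ≤ n + b := by
    exact_mod_cast mul_ceilDiv_lt_add (n := n) (zero_lt_one.trans hb)
  rw [div_add' _ _ _ hb'.ne', div_add_one hb'.ne', div_le_div_iff_of_pos_right hb']
  linarith

theorem stmt1_general (hb : 1 < b) {c : 𝕜} (hc : 0 ≤ c) {d : ℕ → 𝕜}
    (hd : ∀ n, 1 < n → d n ≤ d (n ⌈/⌉ b) + c * (n ⌈/⌉ b : ℕ)) {n : ℕ} (hn : 0 < n) :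
    d n ≤ d 1 + c * ((n - 1) / (b - 1) + Nat.clog b n) := by
  let u (m : ℕ) : 𝕜 := d 1 + c * ((m - 1) / (b - 1) + Nat.clog b m)
  refine le_of_ceilDiv_recurrence (u := u) hb (by simp [u]) hd (fun m hm ↦ ?_) hn
  have h_step := mul_le_mul_of_nonneg_left (ceilDiv_sub_one_div_add_ceilDiv_le hb m) hc
  simp only [u, clog_eq_clog_ceilDiv_add_one hb hm, Nat.cast_add, Nat.cast_one]
  linarith

end Field

theorem stmt1 (d : ℕ → ℕ) (h1 : d 1 = 0)
    (hrec : ∀ n, 2 ≤ n → d n ≤ d ((n + 1) / 2) + 2 * ((n + 1) / 2)) :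
    ∀ n, 1 ≤ n → d n ≤ 2 * n + 2 * Nat.clog 2 n := by
  intro n hn
  have h := stmt1_general (𝕜 := ℚ) one_lt_two zero_le_two (d := fun m ↦ d m)
    (fun m hm ↦ by exact_mod_cast hrec m hm) hn
  simp only [h1, Nat.cast_zero, Nat.cast_ofNat] at h
  qify
  linarith
end

section
/- Let A and B be n×n matrices over F₂ with A invertible. Then there exists a partial permutation matrix P of size n×n such that B + P·A is invertible. -/
/-!
A diagonal `P` with entries `0` and `1` suffices: `B + P * A` is then the matrix with rows taken
from `A + B` on some set `s` of indices and from `B` elsewhere. Since `A = (A + B) - B` and `det` is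
multilinear in the rows, `det A` is a signed sum, over all `s`, of the determinants of these
matrices. If none of them were a unit, then in a local ring neither would `det A` be.
-/

theorem isPartialPermMatrix_diagonal {n : ℕ} (d : Fin n → ZMod 2) :
    IsPartialPermMatrix (Matrix.diagonal d) := by
  refine ⟨fun i => ?_, fun j => ?_⟩
  · have hrow : (Finset.univ.filter fun j => Matrix.diagonal d i j ≠ 0) ⊆ {i} := fun j hj =>
      Finset.mem_singleton.2 <| by_contra fun hji =>
        (Finset.mem_filter.1 hj).2 (Matrix.diagonal_apply_ne' d hji)
    exact Finset.card_le_card hrow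
  · have hcol : (Finset.univ.filter fun i => Matrix.diagonal d i j ≠ 0) ⊆ {j} := fun i hi =>
      Finset.mem_singleton.2 <| by_contra fun hij =>
        (Finset.mem_filter.1 hi).2 (Matrix.diagonal_apply_ne d hij)
    exact Finset.card_le_card hcol

theorem multilinearMap_sub_eq_sum_piecewise {R ι N : Type*} {M : ι → Type*} [CommRing R]
    [Fintype ι] [DecidableEq ι] [∀ i, AddCommGroup (M i)] [∀ i, Module R (M i)]
    [AddCommGroup N] [Module R N] (f : MultilinearMap R M N) (u v : ∀ i, M i) :
    f (u - v) = ∑ s : Finset ι, (-1 : R) ^ sᶜ.card • f (s.piecewise u v) := by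
  rw [sub_eq_add_neg, f.map_add_univ]
  refine Finset.sum_congr rfl fun s _ => ?_
  have hneg : s.piecewise u (-v) =
      sᶜ.piecewise (fun i => (-1 : R) • s.piecewise u v i) (s.piecewise u v) := by
    ext i
    by_cases hi : i ∈ s <;> simp [hi]
  rw [hneg, f.map_piecewise_smul, Finset.prod_const]

section Matrix

variable {R ι : Type*} [Fintype ι] [DecidableEq ι]

theorem add_diagonal_piecewise_mul [NonAssocSemiring R] (A B : Matrix ι ι R) (s : Finset ι) :
    B + Matrix.diagonal (s.piecewise 1 0) * A = Matrix.of (s.piecewise (A + B) B) := by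
  ext i j
  by_cases hi : i ∈ s <;> simp [Finset.piecewise, hi, add_comm]

theorem det_eq_sum_det_add_diagonal_piecewise_mul [CommRing R] (A B : Matrix ι ι R) :
    A.det = ∑ s : Finset ι,
      (-1) ^ sᶜ.card * (B + Matrix.diagonal (s.piecewise 1 0) * A).det := by
  simp only [add_diagonal_piecewise_mul]
  calc A.det = (A + B - B).det := by rw [add_sub_cancel_right]
    _ = _ := multilinearMap_sub_eq_sum_piecewise
      (Matrix.detRowAlternating (R := R) (n := ι)).toMultilinearMap (A + B) B

theorem stmt8_general [CommRing R] [IsLocalRing R] (A B : Matrix ι ι R) (hA : IsUnit A) :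
    ∃ s : Finset ι, IsUnit (B + Matrix.diagonal (s.piecewise 1 0) * A) := by
  simp only [Matrix.isUnit_iff_isUnit_det] at hA ⊢
  by_contra! hdet
  have hA' : A.det ∈ IsLocalRing.maximalIdeal R := by
    rw [det_eq_sum_det_add_diagonal_piecewise_mul A B]
    exact sum_mem fun s _ => Ideal.mul_mem_left _ _ (hdet s)
  exact IsLocalRing.notMem_maximalIdeal.2 hA hA'

end Matrix

theorem stmt8 {n : ℕ} (A B : Matrix (Fin n) (Fin n) (ZMod 2)) (hA : IsUnit A) :
    ∃ P : Matrix (Fin n) (Fin n) (ZMod 2),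
      IsPartialPermMatrix P ∧ IsUnit (B + P * A) := by
  obtain ⟨s, hs⟩ := stmt8_general A B hA
  exact ⟨_, isPartialPermMatrix_diagonal _, hs⟩
end
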